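/- In the one-dimensional case with Gaussian prior θ ∼ N(0,s²) and Σ < s², the discretized Langevin chain P_Σ for a Gibbs random field posterior is geometrically ergodic with limiting distribution π_Σ, the noisy Langevin chain P̂_{Σ,N} is geometrically ergodic for all sufficiently large N with limiting distribution π_{Σ,N}, and ||π_Σ − π_{Σ,N}|| → 0 in total variation as N → ∞. -/

import Mathlib

open MeasureTheory ProbabilityTheory Filter

noncomputable def gibbsF1 {Y : Type*} [Fintype Y] (s : Y → ℝ) (θ : ℝ) (y : Y) : ℝ :=
  Real.exp (θ * s y) / ∑ y', Real.exp (θ * s y')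

noncomputable def tvDist {Θ : Type*} [MeasurableSpace Θ] (μ ν : Measure Θ) : ℝ :=
  ⨆ s : Set Θ, |(μ s).toReal - (ν s).toReal|

noncomputable def iterK {Θ : Type*} [MeasurableSpace Θ] (P : Θ → Measure Θ) :
    ℕ → Θ → Measure Θ
  | 0 => fun θ => Measure.dirac θ
  | n + 1 => fun θ => (iterK P n θ).bind P


lemma aux_tv_le (μ ν : Measure ℝ) [IsProbabilityMeasure μ] [IsProbabilityMeasure ν] {ε : ℝ}
    (h : ∀ A, MeasurableSet A → |μ.real A - ν.real A| ≤ ε) : tvDist μ ν ≤ ε := by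
  refine ciSup_le fun s => ?_
  let B := toMeasurable μ s ∩ toMeasurable ν s
  have hsB : s ⊆ B := Set.subset_inter (subset_toMeasurable _ _) (subset_toMeasurable _ _)
  have h1 : μ B = μ s := le_antisymm
    ((measure_mono Set.inter_subset_left).trans (measure_toMeasurable s).le) (measure_mono hsB)
  have h2 : ν B = ν s := le_antisymm
    ((measure_mono Set.inter_subset_right).trans (measure_toMeasurable s).le) (measure_mono hsB)
  have := h B ((measurableSet_toMeasurable _ _).inter (measurableSet_toMeasurable _ _))
  simpa [Measure.real, h1, h2] using this

lemma aux_tv_nonneg (μ ν : Measure ℝ) : 0 ≤ tvDist μ ν :=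
  Real.iSup_nonneg fun _ => abs_nonneg _

lemma aux_int_le (μ ν : Measure ℝ) [IsProbabilityMeasure μ] [IsProbabilityMeasure ν] {ε : ℝ}
    (h : ∀ A, MeasurableSet A → |μ.real A - ν.real A| ≤ ε) (f : ℝ → ℝ) (hf : Measurable f)
    (h0 : ∀ x, 0 ≤ f x) (h1 : ∀ x, f x ≤ 1) : |∫ x, f x ∂μ - ∫ x, f x ∂ν| ≤ ε := by
  have hi : ∀ (μ : Measure ℝ) [IsProbabilityMeasure μ], Integrable f μ := fun μ _ =>
    Integrable.of_bound hf.aestronglyMeasurable 1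
      (Eventually.of_forall fun x => by rw [Real.norm_eq_abs, abs_of_nonneg (h0 x)]; exact h1 x)
  have hm : ∀ (μ : Measure ℝ) [IsProbabilityMeasure μ],
      IntegrableOn (fun t => μ.real {a | t ≤ f a}) (Set.Ioc 0 1) := by
    intro μ _
    have hanti : Antitone (fun t => μ.real {a | t ≤ f a}) := by
      intro s t hst
      exact measureReal_mono (fun a (ha : t ≤ f a) => hst.trans ha)
    exact ((hanti.antitoneOn _).integrableOn_isCompact isCompact_Icc).mono_set Set.Ioc_subset_Icc_self
  rw [(hi μ).integral_eq_integral_Ioc_meas_le (M := 1) (Eventually.of_forall h0) (Eventually.of_forall h1),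
    (hi ν).integral_eq_integral_Ioc_meas_le (M := 1) (Eventually.of_forall h0) (Eventually.of_forall h1),
    ← integral_sub (hm μ) (hm ν)]
  have := norm_setIntegral_le_of_norm_le_const (μ := volume) (s := Set.Ioc (0:ℝ) 1) (C := ε)
    (f := fun t => μ.real {a | t ≤ f a} - ν.real {a | t ≤ f a}) (by simp)
    (fun t _ => h _ (measurableSet_le measurable_const hf))
  simpa using this

lemma aux_limit (μ : ℕ → Measure ℝ) [∀ n, IsProbabilityMeasure (μ n)] (l : Set ℝ → ℝ) (ε : ℕ → ℝ)
    (hε : Tendsto ε atTop (nhds 0))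
    (h : ∀ n A, MeasurableSet A → |(μ n).real A - l A| ≤ ε n) :
    ∃ π : Measure ℝ, IsProbabilityMeasure π ∧ ∀ A, MeasurableSet A → π.real A = l A := by
  have ht : ∀ A, MeasurableSet A → Tendsto (fun n => (μ n).real A) atTop (nhds (l A)) := by
    intro A hA
    rw [tendsto_iff_dist_tendsto_zero]
    exact squeeze_zero (fun _ => dist_nonneg) (fun n => h n A hA) hε
  have hnn : ∀ A, MeasurableSet A → 0 ≤ l A := fun A hA =>
    ge_of_tendsto' (ht A hA) fun n => measureReal_nonneg
  have hempty : l ∅ = 0 := by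
    refine tendsto_nhds_unique (ht ∅ .empty) ?_
    simp
  have huniv : l Set.univ = 1 := by
    refine tendsto_nhds_unique (ht _ .univ) ?_
    simp
  have hsum : ∀ f : ℕ → Set ℝ, (∀ i, MeasurableSet (f i)) → Pairwise (Function.onFun Disjoint f) →
      HasSum (fun i => l (f i)) (l (⋃ i, f i)) := by
    intro f hf hd
    rw [hasSum_iff_tendsto_nat_of_nonneg (fun i => hnn _ (hf i))]
    have hfin : ∀ (n k : ℕ), ∑ i ∈ Finset.range k, (μ n).real (f i)
        = (μ n).real (⋃ i ∈ Finset.range k, f i) := by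
      intro n k
      rw [measureReal_biUnion_finset]
      · exact fun i _ j _ hij => hd hij
      · exact fun i _ => hf i
    have hfinl : ∀ k : ℕ, ∑ i ∈ Finset.range k, l (f i) = l (⋃ i ∈ Finset.range k, f i) := by
      intro k
      refine tendsto_nhds_unique (tendsto_finsetSum (Finset.range k) fun i _ => ht _ (hf i)) ?_
      simp_rw [hfin]
      exact ht _ (Finset.measurableSet_biUnion _ fun i _ => hf i)
    have hk : ∀ n, Tendsto (fun k => ∑ i ∈ Finset.range k, (μ n).real (f i)) atTop
        (nhds ((μ n).real (⋃ i, f i))) := by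
      intro n
      have hU := measure_iUnion (μ := μ n) hd hf
      have hs : HasSum (fun i => (μ n).real (f i)) ((μ n).real (⋃ i, f i)) := by
        have := ENNReal.hasSum_toReal (f := fun i => μ n (f i)) (by rw [← hU]; exact measure_ne_top _ _)
        rwa [← ENNReal.tsum_toReal_eq (fun i => measure_ne_top _ _), ← hU] at this
      exact hs.tendsto_sum_nat
    rw [Metric.tendsto_atTop]
    intro e he
    obtain ⟨n, hn⟩ := ((tendsto_order.1 hε).2 (e/3) (by positivity)).exists
    obtain ⟨K, hK⟩ := Metric.tendsto_atTop.1 (hk n) (e/3) (by positivity)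
    refine ⟨K, fun k hkk => ?_⟩
    have h1 := hK k hkk
    have h2 := h n _ (Finset.measurableSet_biUnion (Finset.range k) fun i _ => hf i)
    have h3 := h n _ (MeasurableSet.iUnion hf)
    rw [hfin] at h1
    rw [hfinl]
    rw [Real.dist_eq] at *
    rw [abs_le] at *
    rw [abs_lt] at *
    constructor <;> linarith [h1.1, h1.2, h2.1, h2.2, h3.1, h3.2]
  let π : Measure ℝ := Measure.ofMeasurable (fun A _ => ENNReal.ofReal (l A)) (by simp [hempty])
    (by
      intro f hf hd
      have := hsum f hf hd
      rw [← this.tsum_eq, ENNReal.ofReal_tsum_of_nonneg (fun i => hnn _ (hf i)) this.summable])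
  have hπ : ∀ A, MeasurableSet A → π A = ENNReal.ofReal (l A) := fun A hA =>
    Measure.ofMeasurable_apply A hA
  refine ⟨π, ⟨by rw [hπ _ .univ, huniv]; simp⟩, fun A hA => ?_⟩
  rw [Measure.real, hπ A hA, ENNReal.toReal_ofReal (hnn A hA)]

structure GoodK (κ : Kernel ℝ ℝ) (a b α R : ℝ) : Prop where
  markov : IsMarkovKernel κ
  int : ∀ x, Integrable (fun y => |y|) (κ x)
  drift : ∀ x, ∫ y, |y| ∂(κ x) ≤ a * |x| + b
  minor : ∀ x, |x| ≤ R → ENNReal.ofReal α • (volume.restrict (Set.Icc (0:ℝ) 1)) ≤ κ x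

structure LipB (β c : ℝ) (φ : ℝ → ℝ) : Prop where
  meas : Measurable φ
  bdd : ∀ x, |φ x| ≤ 1
  lip : ∀ x y, |φ x - φ y| ≤ c * (2 + β * |x| + β * |y|)

lemma LipB.integrable {β c : ℝ} {φ : ℝ → ℝ} (h : LipB β c φ) (μ : Measure ℝ)
    [IsFiniteMeasure μ] : Integrable φ μ :=
  Integrable.of_bound h.meas.aestronglyMeasurable 1 (Eventually.of_forall h.bdd)

lemma LipB.shift {β c : ℝ} {φ : ℝ → ℝ} (h : LipB β c φ) :
    ∃ k, ∀ x, |φ x - k| ≤ c * (1 + β * |x|) := by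
  have key : ∀ x y, φ x - c * (1 + β * |x|) ≤ φ y + c * (1 + β * |y|) := by
    intro x y
    have := (abs_le.1 (h.lip x y)).2
    nlinarith
  have hb : BddAbove (Set.range fun x => φ x - c * (1 + β * |x|)) :=
    ⟨_, by rintro _ ⟨x, rfl⟩; exact key x 0⟩
  refine ⟨⨆ x, (φ x - c * (1 + β * |x|)), fun x => ?_⟩
  have h1 := le_ciSup hb x
  have h2 : ⨆ x, (φ x - c * (1 + β * |x|)) ≤ φ x + c * (1 + β * |x|) := ciSup_le fun y => key y x
  rw [abs_le]; constructor <;> linarith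

lemma aux_absint (μ : Measure ℝ) [IsFiniteMeasure μ] (hint : Integrable (fun y => |y|) μ)
    {β c k : ℝ} {φ : ℝ → ℝ} (hk : ∀ x, |φ x - k| ≤ c * (1 + β * |x|)) :
    |∫ y, (φ y - k) ∂μ| ≤ c * (μ.real Set.univ + β * ∫ y, |y| ∂μ) := by
  have h2 : Integrable (fun x => c * (1 + β * |x|)) μ :=
    ((integrable_const 1).add (hint.const_mul β)).const_mul c
  have h1 := norm_integral_le_of_norm_le (f := fun y => φ y - k) h2 (Eventually.of_forall hk)
  rw [Real.norm_eq_abs] at h1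
  refine h1.trans (le_of_eq ?_)
  rw [integral_const_mul, integral_add (integrable_const 1) (hint.const_mul β), integral_const_mul]
  simp

lemma aux_contract {κ : Kernel ℝ ℝ} {a b α R : ℝ} (hκ : GoodK κ a b α R)
    (ha0 : 0 ≤ a) (hb : 0 ≤ b) (hα0 : 0 < α)
    {β γ : ℝ} (hβ : 0 < β) (hγa : a ≤ γ) (hγ1 : γ ≤ 1) (h1 : 2 * (1 - γ) + 2 * β * b ≤ (γ - a) * β * R)
    (h2 : 2 * (1 - α) + 2 * β * b ≤ 2 * γ)
    {c : ℝ} (hc : 0 ≤ c) {φ : ℝ → ℝ} (h : LipB β c φ) :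
    LipB β (c * γ) (fun x => ∫ y, φ y ∂(κ x)) := by
  have := hκ.markov
  refine ⟨(h.meas.stronglyMeasurable.integral_kernel (κ := κ)).measurable, fun x => ?_, fun x y => ?_⟩
  · have := norm_integral_le_of_norm_le_const (μ := κ x) (f := φ) (C := 1) (Eventually.of_forall h.bdd)
    simpa using this
  · obtain ⟨k, hk⟩ := h.shift
    have hsh : ∀ x, ∫ y, φ y ∂(κ x) = ∫ y, (φ y - k) ∂(κ x) + k := by
      intro x
      rw [integral_sub (h.integrable _) (integrable_const k)]
      simp
    have hgoal : |∫ z, (φ z - k) ∂(κ x) - ∫ z, (φ z - k) ∂(κ y)|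
        ≤ c * γ * (2 + β * |x| + β * |y|) → |∫ z, φ z ∂(κ x) - ∫ z, φ z ∂(κ y)|
        ≤ c * γ * (2 + β * |x| + β * |y|) := by
      intro H; rw [hsh x, hsh y]; simpa using H
    apply hgoal
    have hx0 := abs_nonneg x
    have hy0 := abs_nonneg y
    have hdx := hκ.drift x
    have hdy := hκ.drift y
    by_cases hR : R ≤ |x| + |y|
    · have e1 := aux_absint (κ x) (hκ.int x) hk
      have e2 := aux_absint (κ y) (hκ.int y) hk
      simp only [probReal_univ] at e1 e2
      refine (abs_sub _ _).trans ((add_le_add e1 e2).trans ?_)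
      rw [← mul_add, mul_assoc]
      refine mul_le_mul_of_nonneg_left ?_ hc
      have : (γ - a) * β * R ≤ (γ - a) * β * (|x| + |y|) :=
        mul_le_mul_of_nonneg_left hR (mul_nonneg (by linarith) hβ.le)
      nlinarith
    · push Not at hR
      set ν : Measure ℝ := ENNReal.ofReal α • (volume.restrict (Set.Icc (0:ℝ) 1)) with hν
      have hνf : IsFiniteMeasure ν := by
        refine ⟨?_⟩
        simp [hν]
      have hνu : ν.real Set.univ = α := by
        simp [hν, Measure.real, hα0.le]
      have key : ∀ x, |x| ≤ R → ∃ r, ∫ z, (φ z - k) ∂(κ x) = ∫ z, (φ z - k) ∂ν + r ∧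
          |r| ≤ c * (1 - α + β * (a * |x| + b)) := by
        intro x hx
        have hle := hκ.minor x hx
        have hdec : κ x - ν + ν = κ x := Measure.sub_add_cancel_of_le hle
        have hsub : κ x - ν ≤ κ x := Measure.sub_le
        have hf : IsFiniteMeasure (κ x - ν) := isFiniteMeasure_of_le _ hsub
        refine ⟨∫ z, (φ z - k) ∂(κ x - ν), ?_, ?_⟩
        · have i1 : Integrable (fun z => φ z - k) (κ x - ν) := (h.integrable _).sub (integrable_const k)
          have i2 : Integrable (fun z => φ z - k) ν := (h.integrable _).sub (integrable_const k)
          conv_lhs => rw [← hdec]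
          rw [integral_add_measure i1 i2, add_comm]
        · refine (aux_absint _ ((hκ.int x).mono_measure hsub) hk).trans ?_
          refine mul_le_mul_of_nonneg_left ?_ hc
          have u : (κ x - ν).real Set.univ = 1 - α := by
            have : (κ x).real Set.univ = (κ x - ν).real Set.univ + ν.real Set.univ := by
              conv_lhs => rw [← hdec]
              rw [measureReal_add_apply]
            rw [probReal_univ, hνu] at this
            linarith
          rw [u]
          have m : ∫ y, |y| ∂(κ x - ν) ≤ ∫ y, |y| ∂(κ x) :=
            integral_mono_measure hsub (Eventually.of_forall fun _ => abs_nonneg _) (hκ.int x)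
          have := hκ.drift x
          nlinarith
      obtain ⟨r1, e1, b1⟩ := key x (by linarith)
      obtain ⟨r2, e2, b2⟩ := key y (by linarith)
      rw [e1, e2, add_sub_add_left_eq_sub]
      refine (abs_sub _ _).trans ((add_le_add b1 b2).trans ?_)
      rw [← mul_add, mul_assoc]
      refine mul_le_mul_of_nonneg_left ?_ hc
      have : a * (β * (|x| + |y|)) ≤ γ * (β * (|x| + |y|)) :=
        mul_le_mul_of_nonneg_right hγa (by positivity)
      nlinarith

lemma aux_bind_int (κ : Kernel ℝ ℝ) [IsMarkovKernel κ] (μ : Measure ℝ) [IsProbabilityMeasure μ]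
    {φ : ℝ → ℝ} (h : Measurable φ) (hb : ∀ x, |φ x| ≤ 1) :
    ∫ z, φ z ∂(μ.bind κ) = ∫ x, ∫ y, φ y ∂(κ x) ∂μ := by
  have e : μ.bind κ = (κ ∘ₖ Kernel.const Unit μ) () := by
    rw [Kernel.comp_apply]; simp
  have := Kernel.integral_comp (η := κ) (κ := Kernel.const Unit μ) (a := ()) (f := φ)
    (Integrable.of_bound h.aestronglyMeasurable 1 (Eventually.of_forall hb))
  rw [e, this]; simp

lemma aux_iter_prob (κ : Kernel ℝ ℝ) [IsMarkovKernel κ] (n : ℕ) (x : ℝ) :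
    IsProbabilityMeasure (iterK κ n x) := by
  induction n with
  | zero => exact inferInstanceAs (IsProbabilityMeasure (Measure.dirac x))
  | succ n ih =>
    have := ih
    exact inferInstanceAs (IsProbabilityMeasure ((iterK κ n x).bind κ))

lemma aux_iter_int (κ : Kernel ℝ ℝ) [IsMarkovKernel κ] (n : ℕ) (x : ℝ) (φ : ℝ → ℝ)
    (h : Measurable φ) (hb : ∀ x, |φ x| ≤ 1) :
    ∫ z, φ z ∂(iterK κ n x) = (fun (g : ℝ → ℝ) x => ∫ y, g y ∂(κ x))^[n] φ x := by
  induction n generalizing φ with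
  | zero => simp [iterK, integral_dirac]
  | succ n ih =>
    have := aux_iter_prob κ n x
    rw [Function.iterate_succ_apply, ← ih]
    · exact aux_bind_int κ _ h hb
    · exact (h.stronglyMeasurable.integral_kernel (κ := κ)).measurable
    · intro x
      have := norm_integral_le_of_norm_le_const (μ := κ x) (f := φ) (C := 1) (Eventually.of_forall hb)
      simpa using this

lemma aux_bind_real (κ : Kernel ℝ ℝ) [IsMarkovKernel κ] (μ : Measure ℝ) [IsProbabilityMeasure μ]
    {A : Set ℝ} (hA : MeasurableSet A) :
    (μ.bind κ).real A = ∫ x, (κ x).real A ∂μ := by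
  have := aux_bind_int κ μ (φ := A.indicator 1) (measurable_one.indicator hA)
    (fun x => by by_cases hx : x ∈ A <;> simp [hx])
  simpa [integral_indicator_one hA] using this

lemma aux_harris (a b α : ℝ) (ha0 : 0 < a) (ha1 : a < 1) (hb : 0 ≤ b) (hα0 : 0 < α) (hα1 : α < 1) :
    ∃ γ K β : ℝ, 0 < γ ∧ γ < 1 ∧ ∀ κ : Kernel ℝ ℝ, GoodK κ a b α (4 * (b + 1) / (1 - a)) →
      ∃ π : Measure ℝ, IsProbabilityMeasure π ∧ π.bind κ = π ∧
        ∀ θ n A, MeasurableSet A → |(iterK κ n θ).real A - π.real A| ≤ (K + β * |θ|) * γ ^ n := by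
  set R := 4 * (b + 1) / (1 - a) with hR
  have h1a : 0 < 1 - a := by linarith
  have hRpos : 0 < R := by positivity
  have hRa : (1 - a) * R = 4 * (b + 1) := by rw [hR]; field_simp
  set β := α / (2 * (b + 1)) with hβd
  have hβ : 0 < β := by positivity
  have hβb : 2 * β * (b + 1) = α := by rw [hβd]; field_simp
  set γ := 1 - min (α / 2) (min (4 * β / (2 + β * R)) (1 - a)) with hγd
  have hd0 : 0 < min (α / 2) (min (4 * β / (2 + β * R)) (1 - a)) := by
    refine lt_min (by positivity) (lt_min (by positivity) h1a)
  have hd1 : min (α / 2) (min (4 * β / (2 + β * R)) (1 - a)) ≤ α / 2 := min_le_left _ _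
  have hd2 : min (α / 2) (min (4 * β / (2 + β * R)) (1 - a)) ≤ 4 * β / (2 + β * R) :=
    (min_le_right _ _).trans (min_le_left _ _)
  have hd3 : min (α / 2) (min (4 * β / (2 + β * R)) (1 - a)) ≤ 1 - a :=
    (min_le_right _ _).trans (min_le_right _ _)
  rw [le_div_iff₀ (by positivity)] at hd2
  have hγ0 : 0 < γ := by linarith
  have hγ1 : γ < 1 := by linarith
  have c1 : 2 * (1 - γ) + 2 * β * b ≤ (γ - a) * β * R := by
    have e : (γ - a) * β * R = β * ((1 - a) * R) - (1 - γ) * (β * R) := by ring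
    rw [e, hRa]
    nlinarith
  have c2 : 2 * (1 - α) + 2 * β * b ≤ 2 * γ := by nlinarith
  refine ⟨γ, (2 + β * b) / (1 - γ) + 2, β, hγ0, hγ1, fun κ hκ => ?_⟩
  have := hκ.markov
  set T : (ℝ → ℝ) → ℝ → ℝ := fun g x => ∫ y, g y ∂(κ x) with hT
  have hit : ∀ (n : ℕ) (φ : ℝ → ℝ), LipB β 1 φ → LipB β (γ ^ n) (T^[n] φ) := by
    intro n φ hφ
    induction n with
    | zero => simpa using hφ
    | succ n ih =>
      rw [Function.iterate_succ_apply', pow_succ]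
      exact aux_contract hκ ha0.le hb hα0 hβ (by linarith) hγ1.le c1 c2 (by positivity) ih
  have hind : ∀ A : Set ℝ, MeasurableSet A → LipB β 1 (A.indicator 1) := by
    intro A hA
    refine ⟨measurable_one.indicator hA, fun x => ?_, fun x y => ?_⟩
    · by_cases hx : x ∈ A <;> simp [hx]
    · have : |A.indicator (1 : ℝ → ℝ) x - A.indicator 1 y| ≤ 1 := by
        by_cases hx : x ∈ A <;> by_cases hy : y ∈ A <;> simp [hx, hy]
      have : 0 ≤ β * |x| + β * |y| := by positivity
      linarith
  have hrep : ∀ n x (A : Set ℝ), MeasurableSet A → (iterK κ n x).real A = T^[n] (A.indicator 1) x := by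
    intro n x A hA
    have := aux_iter_int κ n x _ (hind A hA).meas (hind A hA).bdd
    rw [← this, integral_indicator_one hA]
  have hprob := aux_iter_prob κ
  have hstep : ∀ (A : Set ℝ), MeasurableSet A → ∀ n,
      dist ((iterK κ n 0).real A) ((iterK κ (n+1) 0).real A) ≤ (2 + β * b) * γ ^ n := by
    intro A hA n
    rw [hrep _ _ _ hA, hrep _ _ _ hA, Function.iterate_succ_apply']
    have hL := hit n _ (hind A hA)
    set g := T^[n] (A.indicator 1)
    have e : T g 0 - g 0 = ∫ y, (g y - g 0) ∂(κ 0) := by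
      rw [integral_sub (hL.integrable _) (integrable_const _)]; simp [hT]
    have i2 : Integrable (fun y => γ ^ n * (2 + β * |y|)) (κ 0) :=
      ((integrable_const 2).add ((hκ.int 0).const_mul β)).const_mul _
    have := norm_integral_le_of_norm_le (f := fun y => g y - g 0) i2
      (Eventually.of_forall fun y => by have := hL.lip y 0; simpa using this)
    rw [dist_comm, Real.dist_eq, e]
    refine this.trans ?_
    rw [integral_const_mul, integral_add (integrable_const 2) ((hκ.int 0).const_mul β),
      integral_const_mul, mul_comm]
    have hd := hκ.drift 0
    simp only [abs_zero, mul_zero, zero_add] at hd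
    simp only [integral_const, probReal_univ, one_smul]
    gcongr
  have hlim : ∀ A : Set ℝ, ∃ l : ℝ, MeasurableSet A →
      Tendsto (fun n => (iterK κ n 0).real A) atTop (nhds l) := by
    intro A
    by_cases hA : MeasurableSet A
    · obtain ⟨l, hl⟩ := cauchySeq_tendsto_of_complete
        (cauchySeq_of_le_geometric γ (2 + β * b) hγ1 (hstep A hA))
      exact ⟨l, fun _ => hl⟩
    · exact ⟨0, fun h => absurd h hA⟩
  choose l hl using hlim
  have hlb : ∀ n A, MeasurableSet A →
      |(iterK κ n 0).real A - l A| ≤ (2 + β * b) * γ ^ n / (1 - γ) := fun n A hA =>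
    dist_le_of_le_geometric_of_tendsto γ (2 + β * b) hγ1 (hstep A hA) (hl A hA) n
  have hε : Tendsto (fun n => (2 + β * b) * γ ^ n / (1 - γ)) atTop (nhds 0) := by
    have := ((tendsto_pow_atTop_nhds_zero_of_lt_one hγ0.le hγ1).const_mul (2 + β * b)).div_const (1 - γ)
    simpa using this
  obtain ⟨π, hπ, hπl⟩ := aux_limit (fun n => iterK κ n 0) l _ hε hlb
  have hπb : ∀ n A, MeasurableSet A →
      |(iterK κ n 0).real A - π.real A| ≤ (2 + β * b) * γ ^ n / (1 - γ) := fun n A hA => by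
    rw [hπl A hA]; exact hlb n A hA
  refine ⟨π, hπ, ?_, fun θ n A hA => ?_⟩
  · ext A hA
    rw [← measureReal_eq_measureReal_iff]
    refine tendsto_nhds_unique (f := fun n => (iterK κ (n+1) 0).real A) (l := atTop) ?_ ?_
    · rw [tendsto_iff_dist_tendsto_zero]
      refine squeeze_zero (fun _ => dist_nonneg) (fun n => ?_) hε
      rw [aux_bind_real κ π hA]
      change dist (((iterK κ n 0).bind κ).real A) _ ≤ _
      rw [aux_bind_real κ _ hA, Real.dist_eq]
      exact aux_int_le _ _ (hπb n) _ (Kernel.measurable_coe κ hA).ennreal_toReal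
        (fun _ => measureReal_nonneg) (fun _ => measureReal_le_one)
    · rw [hπl A hA]
      exact (hl A hA).comp (tendsto_add_atTop_nat 1)
  · have h1 := hπb n A hA
    have h2 := (hit n _ (hind A hA)).lip θ 0
    rw [← hrep _ _ _ hA, ← hrep _ _ _ hA] at h2
    refine (abs_sub_le _ _ _).trans ((add_le_add h2 h1).trans (le_of_eq ?_))
    simp
    ring

lemma aux_perturb (κ η : Kernel ℝ ℝ) [IsMarkovKernel κ] [IsMarkovKernel η] {ε : ℝ}
    (h : ∀ x A, MeasurableSet A → |(κ x).real A - (η x).real A| ≤ ε) (n : ℕ) (x : ℝ) :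
    ∀ A, MeasurableSet A → |(iterK κ n x).real A - (iterK η n x).real A| ≤ n * ε := by
  induction n with
  | zero => intro A hA; simp [iterK]
  | succ n ih =>
    intro A hA
    have := aux_iter_prob κ n x
    have := aux_iter_prob η n x
    change |((iterK κ n x).bind κ).real A - ((iterK η n x).bind η).real A| ≤ _
    rw [aux_bind_real κ _ hA, aux_bind_real η _ hA]
    have mη := (Kernel.measurable_coe η hA).ennreal_toReal
    have mκ := (Kernel.measurable_coe κ hA).ennreal_toReal
    have h1 := aux_int_le _ _ ih (fun y => (η y).real A) mη
        (fun _ => measureReal_nonneg) (fun _ => measureReal_le_one)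
    have iκ : Integrable (fun y => (κ y).real A) (iterK κ n x) :=
      Integrable.of_bound mκ.aestronglyMeasurable 1 (Eventually.of_forall fun y => by
        rw [Real.norm_eq_abs, abs_of_nonneg measureReal_nonneg]; exact measureReal_le_one)
    have iη : Integrable (fun y => (η y).real A) (iterK κ n x) :=
      Integrable.of_bound mη.aestronglyMeasurable 1 (Eventually.of_forall fun y => by
        rw [Real.norm_eq_abs, abs_of_nonneg measureReal_nonneg]; exact measureReal_le_one)
    have h2 : |∫ y, (κ y).real A ∂(iterK κ n x) - ∫ y, (η y).real A ∂(iterK κ n x)| ≤ ε := by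
      rw [← integral_sub iκ iη]
      have := norm_integral_le_of_norm_le_const (μ := iterK κ n x)
        (f := fun y => (κ y).real A - (η y).real A) (C := ε) (Eventually.of_forall fun y => h y A hA)
      simpa using this
    refine (abs_sub_le _ _ _).trans ((add_le_add h2 h1).trans (le_of_eq ?_))
    push_cast; ring

lemma aux_gvar (m : ℝ) (v : NNReal) : ∫ x, (x - m) ^ 2 ∂(gaussianReal m v) = v := by
  have h := variance_fun_id_gaussianReal (μ := m) (v := v)
  rw [variance_eq_integral (by fun_prop)] at h
  simpa [integral_id_gaussianReal] using h

lemma aux_gint (m : ℝ) (v : NNReal) : Integrable (fun x => (x - m) ^ 2) (gaussianReal m v) := by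
  have h := memLp_id_gaussianReal (μ := m) (v := v) 2
  have h2 : MemLp (fun x : ℝ => x - m) 2 (gaussianReal m v) := by
    exact h.sub (memLp_const m)
  exact h2.integrable_sq

lemma aux_gint' (m : ℝ) (v : NNReal) : Integrable (fun x => 1 + (x - m) ^ 2) (gaussianReal m v) :=
  (integrable_const _).add (aux_gint m v)

lemma aux_gabs (m : ℝ) (v : NNReal) : Integrable (fun x => |x|) (gaussianReal m v) ∧
    ∫ x, |x| ∂(gaussianReal m v) ≤ |m| + (1 + v) / 2 := by
  have i2 : Integrable (fun x => |m| + (1 + (x - m) ^ 2) / 2) (gaussianReal m v) :=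
    (integrable_const _).add ((aux_gint' m v).div_const 2)
  have hle : ∀ x : ℝ, |x| ≤ |m| + (1 + (x - m) ^ 2) / 2 := by
    intro x
    have h1 : |x| ≤ |m| + |x - m| := by
      have := abs_add_le m (x - m); simpa using this
    have h2 : (x - m) ^ 2 = |x - m| ^ 2 := (sq_abs _).symm
    nlinarith [sq_nonneg (|x - m| - 1)]
  have i1 : Integrable (fun x : ℝ => |x|) (gaussianReal m v) :=
    i2.mono' (by fun_prop) (Eventually.of_forall fun x => by simpa using hle x)
  refine ⟨i1, (integral_mono i1 i2 hle).trans (le_of_eq ?_)⟩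
  rw [integral_add (integrable_const _) ((aux_gint' m v).div_const 2),
    integral_div, integral_add (integrable_const _) (aux_gint m v), aux_gvar]
  simp

lemma aux_gtv1 (m1 m2 : ℝ) {v : NNReal} (hv : v ≠ 0) (A : Set ℝ) :
    (gaussianReal m1 v).real A - (gaussianReal m2 v).real A ≤
      |m1 - m2| * (1 + v + |m1 - m2|) / (2 * v) := by
  have hv0 : (0:ℝ) < v := by positivity
  set g : ℝ → ℝ := fun x => |m1 - m2| * (1 + (x - m1) ^ 2 + |m1 - m2|) / (2 * v) with hg
  have hg0 : ∀ x, 0 ≤ g x := fun x => by positivity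
  have hgm : Measurable g := by fun_prop
  have hgi : Integrable g (gaussianReal m1 v) :=
    (((aux_gint' m1 v).add (integrable_const _)).const_mul _).div_const _
  have hgv : ∫ x, g x ∂(gaussianReal m1 v) = |m1 - m2| * (1 + v + |m1 - m2|) / (2 * v) := by
    rw [hg, integral_div, integral_const_mul,
      integral_add (aux_gint' m1 v) (integrable_const _),
      integral_add (integrable_const _) (aux_gint m1 v), aux_gvar]
    simp
  have hp : ∀ x, gaussianPDFReal m1 v x ≤ gaussianPDFReal m2 v x + gaussianPDFReal m1 v x * g x := by
    intro x
    set t := ((x - m2) ^ 2 - (x - m1) ^ 2) / (2 * v) with ht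
    have h2 : gaussianPDFReal m2 v x = gaussianPDFReal m1 v x * Real.exp (-t) := by
      simp only [gaussianPDFReal]
      rw [mul_assoc _ _ (Real.exp (-t)), ← Real.exp_add]
      congr 2
      rw [ht]; field_simp; ring
    have htg : t ≤ g x := by
      rw [ht, hg]
      refine div_le_div_of_nonneg_right ?_ (by positivity)
      have e : (x - m2) ^ 2 - (x - m1) ^ 2 = (m1 - m2) * (2 * (x - m1) + (m1 - m2)) := by ring
      rw [e]
      refine (le_abs_self _).trans ?_
      rw [abs_mul]
      refine mul_le_mul_of_nonneg_left ?_ (abs_nonneg _)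
      refine (abs_add_le _ _).trans ?_
      have : |2 * (x - m1)| ≤ 1 + (x - m1) ^ 2 := by
        rw [abs_le]; constructor <;> nlinarith [sq_nonneg (x - m1 - 1), sq_nonneg (x - m1 + 1)]
      linarith
    have hexp := Real.add_one_le_exp (-t)
    rw [h2, ← mul_add]
    have hpos := gaussianPDFReal_nonneg m1 v x
    nlinarith
  have hE : gaussianReal m1 v A ≤ gaussianReal m2 v A +
      ENNReal.ofReal (|m1 - m2| * (1 + v + |m1 - m2|) / (2 * v)) := by
    rw [gaussianReal_apply m1 hv, gaussianReal_apply m2 hv, ← hgv,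
      ofReal_integral_eq_lintegral_ofReal hgi (Eventually.of_forall hg0),
      gaussianReal_of_var_ne_zero m1 hv,
      lintegral_withDensity_eq_lintegral_mul _ (measurable_gaussianPDF m1 v) hgm.ennreal_ofReal]
    refine le_trans ?_ (add_le_add_right (setLIntegral_le_lintegral A _) _)
    rw [← lintegral_add_left (measurable_gaussianPDF m2 v)]
    refine lintegral_mono fun x => ?_
    simp only [gaussianPDF, Pi.mul_apply]
    rw [← ENNReal.ofReal_mul (gaussianPDFReal_nonneg _ _ _), ← ENNReal.ofReal_add
      (gaussianPDFReal_nonneg _ _ _) (mul_nonneg (gaussianPDFReal_nonneg _ _ _) (hg0 x))]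
    exact ENNReal.ofReal_le_ofReal (hp x)
  have := ENNReal.toReal_mono (by simp) hE
  rw [ENNReal.toReal_add (measure_ne_top _ _) (by simp), ENNReal.toReal_ofReal (by positivity)] at this
  simp only [Measure.real]
  linarith

lemma aux_gtv (m1 m2 : ℝ) {v : NNReal} (hv : v ≠ 0) (A : Set ℝ) :
    |(gaussianReal m1 v).real A - (gaussianReal m2 v).real A| ≤
      |m1 - m2| * (1 + v + |m1 - m2|) / (2 * v) := by
  rw [abs_le]
  have h1 := aux_gtv1 m1 m2 hv A
  have h2 := aux_gtv1 m2 m1 hv A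
  rw [abs_sub_comm m2 m1] at h2
  constructor <;> linarith

lemma aux_gminor (m M α : ℝ) {v : NNReal} (hv : v ≠ 0) (hm : |m| ≤ M)
    (hα : α ≤ (√(2 * Real.pi * v))⁻¹ * Real.exp (-(1 + M) ^ 2 / (2 * v))) :
    ENNReal.ofReal α • (volume.restrict (Set.Icc (0:ℝ) 1)) ≤ gaussianReal m v := by
  rw [Measure.le_iff]
  intro A hA
  rw [gaussianReal_apply m hv, Measure.smul_apply, Measure.restrict_apply hA, smul_eq_mul,
    ← setLIntegral_const]
  refine le_trans ?_ (lintegral_mono_set (Set.inter_subset_left (t := Set.Icc 0 1)))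
  refine setLIntegral_mono (measurable_gaussianPDF m v) fun x hx => ?_
  refine ENNReal.ofReal_le_ofReal (hα.trans ?_)
  simp only [gaussianPDFReal]
  obtain ⟨hx0, hx1⟩ := hx.2
  obtain ⟨hm1, hm2⟩ := abs_le.1 hm
  gcongr ?_ * Real.exp (?_ / _)
  have : (x - m) ^ 2 ≤ (1 + M) ^ 2 := by
    apply sq_le_sq'
    · linarith
    · linarith
  linarith

noncomputable def gmix {ι : Type*} [Fintype ι] (w m : ι → ℝ) (v : NNReal) : Measure ℝ :=
  ∑ i, ENNReal.ofReal (w i) • gaussianReal (m i) v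

lemma gmix_real {ι : Type*} [Fintype ι] (w m : ι → ℝ) (v : NNReal) (hw : ∀ i, 0 ≤ w i)
    (A : Set ℝ) : (gmix w m v).real A = ∑ i, w i * (gaussianReal (m i) v).real A := by
  simp only [gmix, Measure.real, Measure.coe_finsetSum, Finset.sum_apply, Measure.smul_apply,
    smul_eq_mul]
  rw [ENNReal.toReal_sum (fun i _ => ENNReal.mul_ne_top (by simp) (measure_ne_top _ _))]
  simp [ENNReal.toReal_mul, hw]

lemma gmix_prob {ι : Type*} [Fintype ι] (w m : ι → ℝ) (v : NNReal) (hw : ∀ i, 0 ≤ w i)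
    (h1 : ∑ i, w i = 1) : IsProbabilityMeasure (gmix w m v) := by
  refine ⟨?_⟩
  simp only [gmix, Measure.coe_finsetSum, Finset.sum_apply, Measure.smul_apply,
    smul_eq_mul, measure_univ, mul_one]
  rw [← ENNReal.ofReal_sum_of_nonneg fun i _ => hw i, h1]; simp

lemma gmix_abs {ι : Type*} [Fintype ι] (w m : ι → ℝ) (v : NNReal) (hw : ∀ i, 0 ≤ w i)
    (h1 : ∑ i, w i = 1) {B : ℝ} (hB : ∀ i, |m i| ≤ B) :
    Integrable (fun x => |x|) (gmix w m v) ∧ ∫ x, |x| ∂(gmix w m v) ≤ B + (1 + v) / 2 := by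
  have hi : ∀ i, Integrable (fun x : ℝ => |x|) (ENNReal.ofReal (w i) • gaussianReal (m i) v) :=
    fun i => (aux_gabs (m i) v).1.smul_measure (by simp)
  refine ⟨integrable_finsetSum_measure.2 fun i _ => hi i, ?_⟩
  rw [gmix, integral_finsetSum_measure fun i _ => hi i]
  calc _ ≤ ∑ i, w i * (B + (1 + v) / 2) := by
        refine Finset.sum_le_sum fun i _ => ?_
        rw [integral_smul_measure, ENNReal.toReal_ofReal (hw i), smul_eq_mul]
        refine mul_le_mul_of_nonneg_left ?_ (hw i)
        linarith [(aux_gabs (m i) v).2, hB i]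
    _ = _ := by rw [← Finset.sum_mul, h1, one_mul]

lemma gmix_minor {ι : Type*} [Fintype ι] (w m : ι → ℝ) {v : NNReal} (hv : v ≠ 0) (hw : ∀ i, 0 ≤ w i)
    (h1 : ∑ i, w i = 1) {M α : ℝ} (hm : ∀ i, |m i| ≤ M)
    (hα : α ≤ (√(2 * Real.pi * v))⁻¹ * Real.exp (-(1 + M) ^ 2 / (2 * v))) :
    ENNReal.ofReal α • (volume.restrict (Set.Icc (0:ℝ) 1)) ≤ gmix w m v := by
  have hs : ∑ i, ENNReal.ofReal (w i) = 1 := by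
    rw [← ENNReal.ofReal_sum_of_nonneg fun i _ => hw i, h1]; simp
  rw [Measure.le_iff]
  intro A hA
  rw [← one_mul ((ENNReal.ofReal α • (volume.restrict (Set.Icc (0:ℝ) 1))) A), ← hs, Finset.sum_mul]
  simp only [gmix, Measure.coe_finsetSum, Finset.sum_apply, Measure.smul_apply (μ := gaussianReal _ _),
    smul_eq_mul]
  exact Finset.sum_le_sum fun i _ => mul_le_mul_right (aux_gminor (m i) M α hv (hm i) hα A) _

lemma gmix_good {ι : Type*} [Fintype ι] (w m : ℝ → ι → ℝ) {v : NNReal} (hv : v ≠ 0)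
    (hw : ∀ x i, 0 ≤ w x i) (h1 : ∀ x, ∑ i, w x i = 1) (hwm : ∀ i, Measurable fun x => w x i)
    (hmm : ∀ i, Measurable fun x => m x i) {a c α R : ℝ} (ha : 0 ≤ a)
    (hm : ∀ x i, |m x i| ≤ a * |x| + c)
    (hα : α ≤ (√(2 * Real.pi * v))⁻¹ * Real.exp (-(1 + (a * R + c)) ^ 2 / (2 * v))) :
    ∃ κ : Kernel ℝ ℝ, (∀ x, κ x = gmix (w x) (m x) v) ∧ GoodK κ a (c + (1 + v) / 2) α R := by
  have hmeas : Measurable fun x => gmix (w x) (m x) v := by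
    refine Measure.measurable_of_measurable_coe _ fun A hA => ?_
    simp only [gmix, Measure.coe_finsetSum, Finset.sum_apply, Measure.smul_apply, smul_eq_mul]
    refine Finset.measurable_sum _ fun i _ => (hwm i).ennreal_ofReal.mul ?_
    have hg : Measurable fun x => gaussianReal (m x i) v :=
      measurable_gaussianReal.comp ((hmm i).prodMk measurable_const)
    exact (Measure.measurable_coe hA).comp hg
  refine ⟨⟨_, hmeas⟩, fun x => rfl, ⟨⟨fun x => gmix_prob _ _ _ (hw x) (h1 x)⟩,
    fun x => (gmix_abs _ _ _ (hw x) (h1 x) (hm x)).1, fun x => ?_, fun x hx => ?_⟩⟩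
  · rw [← add_assoc]
    exact (gmix_abs _ _ _ (hw x) (h1 x) (hm x)).2
  · refine gmix_minor _ _ hv (hw x) (h1 x) (fun i => (hm x i).trans ?_) hα
    gcongr

lemma aux_sum1 {Y : Type*} [Fintype Y] (f : Y → ℝ) (h1 : ∑ y, f y = 1) (N : ℕ) :
    ∑ ys : Fin N → Y, ∏ i, f (ys i) = 1 := by
  classical
  have := Finset.prod_univ_sum (fun _ : Fin N => (Finset.univ : Finset Y)) (fun _ y => f y)
  simp only [Fintype.piFinset_univ] at this
  rw [← this, h1]; simp

lemma aux_sum2 {Y : Type*} [Fintype Y] (f g : Y → ℝ) (hf : ∀ y, 0 ≤ f y) (h1 : ∑ y, f y = 1)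
    (h0 : ∑ y, f y * g y = 0) {G : ℝ} (hG : ∀ y, |g y| ≤ G) (N : ℕ) :
    ∑ ys : Fin N → Y, (∏ i, f (ys i)) * (∑ i, g (ys i)) ^ 2 ≤ N * G ^ 2 := by
  induction N with
  | zero => simp
  | succ N ih =>
    rw [← (Fin.consEquiv fun _ => Y).sum_comp, Fintype.sum_prod_type]
    simp only [Fin.consEquiv_apply, Fin.prod_univ_succ, Fin.sum_univ_succ, Fin.cons_zero, Fin.cons_succ]
    have e : ∀ y, ∑ ys : Fin N → Y, (f y * ∏ i, f (ys i)) * (g y + ∑ i, g (ys i)) ^ 2 =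
        f y * (g y) ^ 2 + f y * g y * (2 * ∑ ys : Fin N → Y, (∏ i, f (ys i)) * (∑ i, g (ys i))) +
        f y * ∑ ys : Fin N → Y, (∏ i, f (ys i)) * (∑ i, g (ys i)) ^ 2 := by
      intro y
      have : f y * (g y) ^ 2 = f y * (g y) ^ 2 * ∑ ys : Fin N → Y, ∏ i, f (ys i) := by
        rw [aux_sum1 f h1]; ring
      rw [this]
      simp only [Finset.mul_sum]
      rw [← Finset.sum_add_distrib, ← Finset.sum_add_distrib]
      refine Finset.sum_congr rfl fun ys _ => ?_
      simp only [← Finset.mul_sum]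
      ring
    rw [Finset.sum_congr rfl fun y _ => e y, Finset.sum_add_distrib, Finset.sum_add_distrib,
      ← Finset.sum_mul, ← Finset.sum_mul, h0, h1]
    have hvar : ∑ y, f y * (g y) ^ 2 ≤ G ^ 2 := by
      calc _ ≤ ∑ y, f y * G ^ 2 := by
            refine Finset.sum_le_sum fun y _ => mul_le_mul_of_nonneg_left ?_ (hf y)
            rw [← sq_abs (g y)]
            exact pow_le_pow_left₀ (abs_nonneg _) (hG y) 2
        _ = G ^ 2 := by rw [← Finset.sum_mul, h1, one_mul]
    push_cast
    linarith

lemma aux_sum3 {Y : Type*} [Fintype Y] (f g : Y → ℝ) (hf : ∀ y, 0 ≤ f y) (h1 : ∑ y, f y = 1)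
    (h0 : ∑ y, f y * g y = 0) {G : ℝ} (hG : ∀ y, |g y| ≤ G) {N : ℕ} (hN : 0 < N) :
    ∑ ys : Fin N → Y, (∏ i, f (ys i)) * |(1 / (N:ℝ)) * ∑ i, g (ys i)| ≤ (G ^ 2 + 1) / (2 * √N) := by
  have hN0 : (0:ℝ) < N := by exact_mod_cast hN
  have hs : 0 < √(N:ℝ) := Real.sqrt_pos.2 hN0
  have hss : √(N:ℝ) ^ 2 = N := Real.sq_sqrt hN0.le
  have hpt : ∀ t : ℝ, |(1 / (N:ℝ)) * t| ≤ t ^ 2 / (2 * N * √N) + 1 / (2 * √N) := by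
    intro t
    rw [abs_mul, abs_of_pos (by positivity : 0 < 1 / (N:ℝ)), ← sq_abs t]
    have e : |t| ^ 2 / (2 * N * √N) + 1 / (2 * √N) - 1 / (N:ℝ) * |t| =
      (|t| - √N) ^ 2 / (2 * N * √N) := by
      field_simp
      rw [sub_sq, hss]; ring
    have : 0 ≤ (|t| - √N) ^ 2 / (2 * N * √N) := by positivity
    linarith
  calc _ ≤ ∑ ys : Fin N → Y, ((∏ i, f (ys i)) * (∑ i, g (ys i)) ^ 2 * (1 / (2 * N * √N))
        + (∏ i, f (ys i)) * (1 / (2 * √N))) := by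
        refine Finset.sum_le_sum fun ys _ => ?_
        have := mul_le_mul_of_nonneg_left (hpt (∑ i, g (ys i))) (Finset.prod_nonneg fun i _ => hf (ys i) : 0 ≤ ∏ i, f (ys i))
        refine this.trans (le_of_eq (by ring))
    _ ≤ N * G ^ 2 * (1 / (2 * N * √N)) + 1 * (1 / (2 * √N)) := by
        rw [Finset.sum_add_distrib, ← Finset.sum_mul, ← Finset.sum_mul, aux_sum1 f h1]
        gcongr
        exact aux_sum2 f g hf h1 h0 hG N
    _ = _ := by field_simp

lemma gibbs_nonneg {Y : Type*} [Fintype Y] (s : Y → ℝ) (θ : ℝ) (y : Y) : 0 ≤ gibbsF1 s θ y :=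
  div_nonneg (Real.exp_nonneg _) (Finset.sum_nonneg fun _ _ => Real.exp_nonneg _)

lemma gibbs_sum {Y : Type*} [Fintype Y] [Nonempty Y] (s : Y → ℝ) (θ : ℝ) :
    ∑ y, gibbsF1 s θ y = 1 := by
  simp only [gibbsF1]
  rw [← Finset.sum_div]
  exact div_self (Finset.sum_pos (fun _ _ => Real.exp_pos _) Finset.univ_nonempty).ne'

lemma gibbs_meas {Y : Type*} [Fintype Y] (s : Y → ℝ) (y : Y) :
    Measurable fun θ => gibbsF1 s θ y := by
  unfold gibbsF1
  fun_prop

/-- Convergence of the noisy one-dimensional Langevin chain for a Gibbs random field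
posterior with Gaussian prior `θ ∼ N(0,s²)` and step size `Σ < s²`: the discretized
Langevin chain `P_Σ` is geometrically ergodic with limiting distribution `π_Σ`, the
noisy chain `P̂_{Σ,N}` is geometrically ergodic for all large `N` with limiting
distribution `π_{Σ,N}`, and `‖π_Σ − π_{Σ,N}‖ → 0` as `N → ∞`. -/
theorem stmt18 {Y : Type*} [Fintype Y] [Nonempty Y] (s : Y → ℝ) (S : ℝ)
    (hS : ∀ y, |s y| ≤ S) (yobs : Y)
    (sp : ℝ) (hsp : 0 < sp)
    (σ2 : NNReal) (hσ2pos : 0 < (σ2 : ℝ)) (hσ2 : (σ2 : ℝ) < sp ^ 2)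
    (grad : ℝ → ℝ)
    (hgrad : ∀ θ, grad θ = -θ / sp ^ 2 + s yobs - ∑ y, gibbsF1 s θ y * s y)
    (Psig : ℝ → Measure ℝ)
    (hPsig : ∀ θ0, Psig θ0 = gaussianReal (θ0 + (σ2 : ℝ) / 2 * grad θ0) σ2)
    (Phat : ℕ → ℝ → Measure ℝ)
    (hPhat : ∀ N : ℕ, ∀ θ0 : ℝ, Phat N θ0 =
      ∑ ys : Fin N → Y, ENNReal.ofReal (∏ i, gibbsF1 s θ0 (ys i)) •
        gaussianReal
          (θ0 + (σ2 : ℝ) / 2 *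
            (grad θ0 + (∑ y, gibbsF1 s θ0 y * s y) - (1 / (N : ℝ)) * ∑ i, s (ys i)))
          σ2) :
    ∃ pisig : Measure ℝ, IsProbabilityMeasure pisig ∧ pisig.bind Psig = pisig ∧
      (∃ ρ : ℝ, 0 < ρ ∧ ρ < 1 ∧ ∀ θ0 : ℝ, ∃ C : ℝ, ∀ n : ℕ,
        tvDist (iterK Psig n θ0) pisig ≤ C * ρ ^ n) ∧
      ∃ πN : ℕ → Measure ℝ, ∃ N₁ : ℕ,
        (∀ N ≥ N₁, IsProbabilityMeasure (πN N) ∧ (πN N).bind (Phat N) = πN N ∧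
          ∃ ρ' : ℝ, 0 < ρ' ∧ ρ' < 1 ∧ ∀ θ0 : ℝ, ∃ C' : ℝ, ∀ n : ℕ,
            tvDist (iterK (Phat N) n θ0) (πN N) ≤ C' * ρ' ^ n)
        ∧ Tendsto (fun N => tvDist pisig (πN N)) atTop (nhds 0) := by
  have hS0 : 0 ≤ S := (abs_nonneg _).trans (hS yobs)
  have hv : σ2 ≠ 0 := by
    intro h; simp [h] at hσ2pos
  have hsp2 : 0 < sp ^ 2 := by positivity
  set v : ℝ := (σ2 : ℝ) with hvd
  set a : ℝ := 1 - v / (2 * sp ^ 2) with had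
  have hq : v / (2 * sp ^ 2) < 1 / 2 := by
    rw [div_lt_div_iff₀ (by positivity) (by norm_num)]; linarith
  have hq0 : 0 < v / (2 * sp ^ 2) := by positivity
  have ha0 : 0 < a := by linarith
  have ha1 : a < 1 := by linarith
  set E : ℝ → ℝ := fun θ => ∑ y, gibbsF1 s θ y * s y with hE
  have hEm : Measurable E := Finset.measurable_sum _ fun y _ => (gibbs_meas s y).mul_const _
  have hES : ∀ θ, |E θ| ≤ S := by
    intro θ
    calc |E θ| ≤ ∑ y, |gibbsF1 s θ y * s y| := Finset.abs_sum_le_sum_abs _ _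
      _ ≤ ∑ y, gibbsF1 s θ y * S := by
          refine Finset.sum_le_sum fun y _ => ?_
          rw [abs_mul, abs_of_nonneg (gibbs_nonneg s θ y)]
          exact mul_le_mul_of_nonneg_left (hS y) (gibbs_nonneg s θ y)
      _ = S := by rw [← Finset.sum_mul, gibbs_sum, one_mul]
  set c : ℝ := v * S with hc
  set b : ℝ := c + (1 + v) / 2 with hbd
  have hb : 0 ≤ b := by positivity
  set R : ℝ := 4 * (b + 1) / (1 - a) with hR
  set α : ℝ := min (1 / 2) ((√(2 * Real.pi * σ2))⁻¹ * Real.exp (-(1 + (a * R + c)) ^ 2 / (2 * σ2))) with hα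
  have hα0 : 0 < α := lt_min (by norm_num) (by positivity)
  have hα1 : α < 1 := (min_le_left _ _).trans_lt (by norm_num)
  have hα2 : α ≤ (√(2 * Real.pi * σ2))⁻¹ * Real.exp (-(1 + (a * R + c)) ^ 2 / (2 * σ2)) :=
    min_le_right _ _
  -- mean bound
  have hmean : ∀ θ e : ℝ, |e| ≤ S → |a * θ + v / 2 * (s yobs - e)| ≤ a * |θ| + c := by
    intro θ e he
    refine (abs_add_le _ _).trans ?_
    rw [abs_mul, abs_of_pos ha0, abs_mul, abs_of_pos (by positivity : 0 < v / 2)]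
    have : |s yobs - e| ≤ 2 * S := (abs_sub _ _).trans (by linarith [hS yobs])
    have := mul_le_mul_of_nonneg_left this (by positivity : 0 ≤ v / 2)
    rw [hc]; linarith
  obtain ⟨κ, hκe, hκ⟩ := gmix_good (ι := Unit) (fun _ _ => 1)
    (fun θ _ => a * θ + v / 2 * (s yobs - E θ)) hv (fun _ _ => zero_le_one) (fun _ => by simp)
    (fun _ => measurable_const) (fun _ => by fun_prop) (a := a) (c := c) (α := α) (R := R) ha0.le
    (fun θ _ => hmean θ _ (hES θ)) hα2
  have havg : ∀ (N : ℕ) (ys : Fin N → Y), |(1 / (N:ℝ)) * ∑ i, s (ys i)| ≤ S := by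
    intro N ys
    rcases Nat.eq_zero_or_pos N with h | h
    · subst h; simpa using hS0
    · have hN : (0:ℝ) < N := by exact_mod_cast h
      rw [abs_mul, abs_of_pos (by positivity), one_div, inv_mul_le_iff₀ hN]
      refine (Finset.abs_sum_le_sum_abs _ _).trans ((Finset.sum_le_sum fun i _ => hS (ys i)).trans ?_)
      simp
  have hNk : ∀ N : ℕ, ∃ η : Kernel ℝ ℝ, (∀ θ, η θ = gmix (ι := Fin N → Y)
      (fun ys => ∏ i, gibbsF1 s θ (ys i))
      (fun ys => a * θ + v / 2 * (s yobs - (1 / (N:ℝ)) * ∑ i, s (ys i))) σ2) ∧ GoodK η a b α R := by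
    intro N
    exact gmix_good (fun θ (ys : Fin N → Y) => ∏ i, gibbsF1 s θ (ys i))
      (fun θ ys => a * θ + v / 2 * (s yobs - (1 / (N:ℝ)) * ∑ i, s (ys i))) hv
      (fun θ ys => Finset.prod_nonneg fun i _ => gibbs_nonneg s θ (ys i))
      (fun θ => aux_sum1 _ (gibbs_sum s θ) N)
      (fun ys => Finset.measurable_prod _ fun i _ => gibbs_meas s (ys i))
      (fun ys => by fun_prop) ha0.le (fun θ ys => hmean θ _ (havg N ys)) hα2
  choose η hηe hη using hNk
  have hPe : Psig = κ := by
    funext θ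
    rw [hκe, hPsig, hgrad]
    simp only [gmix, Finset.univ_unique, Finset.sum_singleton, ENNReal.ofReal_one, one_smul]
    congr 1
    rw [had, hE]; field_simp; ring
  have hPNe : ∀ N, Phat N = η N := by
    intro N
    funext θ
    rw [hηe, hPhat, gmix]
    refine Finset.sum_congr rfl fun ys _ => ?_
    congr 2
    rw [hgrad, had]; field_simp; ring
  have hκM := hκ.markov
  have hηM := fun N => (hη N).markov
  -- closeness
  set D : ℝ := (1 + v + c) / (2 * v) * (v / 2 * (((2 * S) ^ 2 + 1) / 2)) with hD
  have hclose : ∀ N : ℕ, 0 < N → ∀ θ A, MeasurableSet A →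
      |(κ θ).real A - (η N θ).real A| ≤ D / √N := by
    intro N hN θ A hA
    have hN0 : (0:ℝ) < N := by exact_mod_cast hN
    have hw0 : ∀ ys : Fin N → Y, 0 ≤ ∏ i, gibbsF1 s θ (ys i) := fun ys =>
      Finset.prod_nonneg fun i _ => gibbs_nonneg s θ (ys i)
    rw [hκe, hηe, gmix_real _ _ _ (fun _ => zero_le_one), gmix_real _ _ _ hw0]
    simp only [Finset.univ_unique, Finset.sum_singleton, one_mul]
    set m : ℝ := a * θ + v / 2 * (s yobs - E θ)
    have e1 : (gaussianReal m σ2).real A =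
        ∑ ys : Fin N → Y, (∏ i, gibbsF1 s θ (ys i)) * (gaussianReal m σ2).real A := by
      rw [← Finset.sum_mul, aux_sum1 _ (gibbs_sum s θ) N, one_mul]
    rw [e1, ← Finset.sum_sub_distrib]
    refine (Finset.abs_sum_le_sum_abs _ _).trans ?_
    have h3 := aux_sum3 (gibbsF1 s θ) (fun y => s y - E θ) (gibbs_nonneg s θ) (gibbs_sum s θ)
      (by simp only [mul_sub]; rw [Finset.sum_sub_distrib, ← Finset.sum_mul, gibbs_sum]; simp [hE])
      (G := 2 * S) (fun y => (abs_sub _ _).trans (by linarith [hS y, hES θ])) hN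
    calc _ ≤ ∑ ys : Fin N → Y, (1 + v + c) / (2 * v) * (v / 2) *
          ((∏ i, gibbsF1 s θ (ys i)) * |(1 / (N:ℝ)) * ∑ i, (s (ys i) - E θ)|) := by
          refine Finset.sum_le_sum fun ys _ => ?_
          rw [← mul_sub, abs_mul, abs_of_nonneg (hw0 ys)]
          have hg := aux_gtv m (a * θ + v / 2 * (s yobs - (1 / (N:ℝ)) * ∑ i, s (ys i))) hv A
          have hd : m - (a * θ + v / 2 * (s yobs - (1 / (N:ℝ)) * ∑ i, s (ys i))) =
              v / 2 * ((1 / (N:ℝ)) * ∑ i, (s (ys i) - E θ)) := by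
            rw [Finset.sum_sub_distrib]
            simp only [Finset.sum_const, Finset.card_univ, Fintype.card_fin, nsmul_eq_mul, m]
            field_simp; ring
          have hd2 : |m - (a * θ + v / 2 * (s yobs - (1 / (N:ℝ)) * ∑ i, s (ys i)))| ≤ c := by
            have e : m - (a * θ + v / 2 * (s yobs - (1 / (N:ℝ)) * ∑ i, s (ys i))) =
              v / 2 * ((1 / (N:ℝ)) * ∑ i, s (ys i) - E θ) := by simp only [m]; ring
            rw [e, abs_mul, abs_of_pos (by positivity : 0 < v / 2)]
            have : |(1 / (N:ℝ)) * ∑ i, s (ys i) - E θ| ≤ 2 * S :=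
              (abs_sub _ _).trans (by linarith [havg N ys, hES θ])
            have := mul_le_mul_of_nonneg_left this (by positivity : 0 ≤ v / 2)
            rw [hc]; linarith
          have hd3 : |m - (a * θ + v / 2 * (s yobs - (1 / (N:ℝ)) * ∑ i, s (ys i)))| =
              v / 2 * |(1 / (N:ℝ)) * ∑ i, (s (ys i) - E θ)| := by
            rw [hd, abs_mul, abs_of_pos (by positivity : 0 < v / 2)]
          have hg2 := mul_le_mul_of_nonneg_left hg (hw0 ys)
          refine hg2.trans ?_
          set δ := |m - (a * θ + v / 2 * (s yobs - (1 / (N:ℝ)) * ∑ i, s (ys i)))| with hδ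
          have hδ0 : 0 ≤ δ := abs_nonneg _
          have : δ * (1 + σ2 + δ) / (2 * σ2) ≤ δ * (1 + v + c) / (2 * v) := by
            gcongr
          refine (mul_le_mul_of_nonneg_left this (hw0 ys)).trans (le_of_eq ?_)
          rw [hd3]; ring
      _ ≤ (1 + v + c) / (2 * v) * (v / 2) * (((2 * S) ^ 2 + 1) / (2 * √N)) := by
          rw [← Finset.mul_sum]
          exact mul_le_mul_of_nonneg_left h3 (by positivity)
      _ = D / √N := by rw [hD]; field_simp
  obtain ⟨γ, K, β, hγ0, hγ1, H⟩ := aux_harris a b α ha0 ha1 hb hα0 hα1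
  obtain ⟨π, hπ, hπi, hπc⟩ := H κ hκ
  choose πN hπN hπNi hπNc using fun N => H (η N) (hη N)
  refine ⟨π, hπ, by rw [hPe]; exact hπi, ⟨γ, hγ0, hγ1, fun θ => ⟨K + β * |θ|, fun n => ?_⟩⟩,
    πN, 0, fun N _ => ⟨hπN N, by rw [hPNe]; exact hπNi N, γ, hγ0, hγ1,
      fun θ => ⟨K + β * |θ|, fun n => ?_⟩⟩, ?_⟩
  · rw [hPe]
    have := aux_iter_prob κ n θ
    exact aux_tv_le _ _ (hπc θ n)
  · rw [hPNe]
    have := aux_iter_prob (η N) n θ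
    have := hπN N
    exact aux_tv_le _ _ (hπNc N θ n)
  · have hbound : ∀ (n N : ℕ), 0 < N → tvDist π (πN N) ≤ 2 * (K * γ ^ n) + n * (D / √N) := by
      intro n N hN
      have := hπN N
      refine aux_tv_le _ _ fun A hA => ?_
      have h1 := hπc 0 n A hA
      have h2 := hπNc N 0 n A hA
      have h3 := aux_perturb κ (η N) (hclose N hN) n 0 A hA
      simp only [abs_zero, mul_zero, add_zero] at h1 h2
      rw [abs_le] at *
      constructor <;> linarith [h1.1, h1.2, h2.1, h2.2, h3.1, h3.2]
    rw [Metric.tendsto_atTop]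
    intro e he
    have t1 : Tendsto (fun n : ℕ => 2 * (K * γ ^ n)) atTop (nhds 0) := by
      have := ((tendsto_pow_atTop_nhds_zero_of_lt_one hγ0.le hγ1).const_mul K).const_mul 2
      simpa using this
    obtain ⟨n, hn⟩ := ((tendsto_order.1 t1).2 (e / 2) (by positivity)).exists
    have t2 : Tendsto (fun N : ℕ => (n : ℝ) * (D / √(N : ℝ))) atTop (nhds 0) := by
      have h1 : Tendsto (fun N : ℕ => √(N : ℝ)) atTop atTop :=
        Real.tendsto_sqrt_atTop.comp tendsto_natCast_atTop_atTop
      have := (h1.const_div_atTop D).const_mul (n : ℝ)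
      simpa using this
    obtain ⟨N0, hN0⟩ := eventually_atTop.1 ((tendsto_order.1 t2).2 (e / 2) (by positivity))
    refine ⟨max N0 1, fun N hN => ?_⟩
    have hN1 := hN0 N ((le_max_left _ _).trans hN)
    have hNp : 0 < N := (le_max_right N0 1).trans hN
    rw [Real.dist_eq, sub_zero, abs_of_nonneg (aux_tv_nonneg _ _)]
    linarith [hbound n N hNp]
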